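/- A coideal H on FIN_k^∞ is semiselective if and only if the partial order (H, ≤*) is σ-distributive: the intersection of countably many ≤*-dense open subsets of H is ≤*-dense. -/

import Mathlib

open scoped symmDiff

namespace FINkSpace

/-- The support of `p : ℕ → ℕ`. -/
def supp (p : ℕ → ℕ) : Set ℕ := {n | p n ≠ 0}

/-- `p` is an element of `FIN_k`: values at most `k`, finite support, `k` attained. -/
def IsFINk (k : ℕ) (p : ℕ → ℕ) : Prop :=
  (∀ n, p n ≤ k) ∧ (supp p).Finite ∧ ∃ n, p n = k

/-- The tetris operation `T(p)(n) = max (p n - 1) 0` (truncated subtraction). -/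
def tetris (p : ℕ → ℕ) : ℕ → ℕ := fun n => p n - 1

/-- `A` is an infinite block sequence of elements of `FIN_k`. -/
def IsBlockSeq (k : ℕ) (A : ℕ → ℕ → ℕ) : Prop :=
  (∀ n, IsFINk k (A n)) ∧ ∀ n i j, A n i ≠ 0 → A (n + 1) j ≠ 0 → i < j

/-- `p` belongs to the combinatorial span `[B]`:
`p = T^{(i₀)}(B n₀) + ⋯ + T^{(i_l)}(B n_l)` with `n₀ < ⋯ < n_l` and some `i_j = 0`.
Note `T^{(i)}(q) m = q m - i` (truncated subtraction). -/
def InSpan (k : ℕ) (B : ℕ → ℕ → ℕ) (p : ℕ → ℕ) : Prop :=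
  ∃ (l : ℕ) (n : Fin (l + 1) → ℕ) (i : Fin (l + 1) → ℕ),
    StrictMono n ∧ (∀ j, i j ≤ k) ∧ (∃ j, i j = 0) ∧
    p = fun m => ∑ j, (B (n j) m - i j)

/-- `A ≤ B` : `A` is a condensation of `B` (every term of `A` lies in `[B]`). -/
def Cond (k : ℕ) (A B : ℕ → ℕ → ℕ) : Prop := ∀ n, InSpan k B (A n)

/-- `A ≤* B` : all but finitely many terms of `A` lie in `[B]`. -/
def AlmostCond (k : ℕ) (A B : ℕ → ℕ → ℕ) : Prop := ∃ N, ∀ n, N ≤ n → InSpan k B (A n)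

/-- `a` is a finite block sequence of elements of `FIN_k`. -/
def IsFinBlockSeq (k : ℕ) (a : List (ℕ → ℕ)) : Prop :=
  (∀ p ∈ a, IsFINk k p) ∧
  ∀ m, m + 1 < a.length → ∀ i j,
    (a.getD m fun _ => 0) i ≠ 0 → (a.getD (m + 1) fun _ => 0) j ≠ 0 → i < j

/-- `p` belongs to the span of the finite block sequence `a`. -/
def InSpanList (k : ℕ) (a : List (ℕ → ℕ)) (p : ℕ → ℕ) : Prop :=
  ∃ (l : ℕ) (n : Fin (l + 1) → ℕ) (i : Fin (l + 1) → ℕ),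
    StrictMono n ∧ (∀ j, n j < a.length) ∧ (∀ j, i j ≤ k) ∧ (∃ j, i j = 0) ∧
    p = fun m => ∑ j, ((a.getD (n j) fun _ => 0) m - i j)

/-- `rList n A` is the finite block sequence of the first `n` blocks of `A`. -/
def rList (n : ℕ) (A : ℕ → ℕ → ℕ) : List (ℕ → ℕ) := (List.range n).map A

/-- `b ≤_fin a` : every term of the finite block sequence `b` lies in the span of `a`. -/
def LeFin (k : ℕ) (b a : List (ℕ → ℕ)) : Prop :=
  IsFinBlockSeq k b ∧ ∀ p ∈ b, InSpanList k a p

/-- The Ellentuck-type basic set `[a,A]`. -/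
def Basic (k : ℕ) (a : List (ℕ → ℕ)) (A : ℕ → ℕ → ℕ) : Set (ℕ → ℕ → ℕ) :=
  {B | IsBlockSeq k B ∧ rList a.length B = a ∧ Cond k B A}

/-- `depth_A(a)` : the least `n` with `a ≤_fin r_n(A)`. -/
noncomputable def depth (k : ℕ) (A : ℕ → ℕ → ℕ) (a : List (ℕ → ℕ)) : ℕ :=
  sInf {n | ∀ p ∈ a, InSpanList k (rList n A) p}

/-- `a ∈ FIN_k^{<∞} ↾ A` : `a` is a finite block sequence all whose terms lie in `[A]`. -/
def FinCond (k : ℕ) (a : List (ℕ → ℕ)) (A : ℕ → ℕ → ℕ) : Prop :=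
  IsFinBlockSeq k a ∧ ∀ p ∈ a, InSpan k A p

end FINkSpace

namespace FINkSpace

/-- A coideal on `FIN_k^∞` (Definition of coideal in the paper). -/
structure Coideal (k : ℕ) where
  mem : (ℕ → ℕ → ℕ) → Prop
  blockseq : ∀ A, mem A → IsBlockSeq k A
  finiteChanges : ∀ A B, mem A → IsBlockSeq k B → (Set.range A ∆ Set.range B).Finite → mem B
  upward : ∀ A B, mem A → IsBlockSeq k B → Cond k A B → mem B
  a3_1 : ∀ A, mem A → ∀ a, FinCond k a A →
    ∀ B, mem B → B ∈ Basic k (rList (depth k A a) A) A → (Basic k a B).Nonempty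
  a3_2 : ∀ A, mem A → ∀ a, FinCond k a A →
    ∀ B, mem B → Cond k B A → (Basic k a B).Nonempty →
      ∃ A', mem A' ∧ A' ∈ Basic k (rList (depth k A a) A) A ∧
        (Basic k a A').Nonempty ∧ Basic k a A' ⊆ Basic k a B
  a4 : ∀ A, mem A → ∀ a, FinCond k a A → ∀ O : Set (List (ℕ → ℕ)),
    ∃ B, mem B ∧ B ∈ Basic k (rList (depth k A a) A) A ∧
      ({b | ∃ C ∈ Basic k a B, b = rList (a.length + 1) C} ⊆ O ∨
       {b | ∃ C ∈ Basic k a B, b = rList (a.length + 1) C} ∩ O = ∅)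

/-- `D` is dense open in `S` (with respect to the condensation order). -/
def DenseOpenIn (k : ℕ) (D S : Set (ℕ → ℕ → ℕ)) : Prop :=
  D ⊆ S ∧ (∀ A ∈ S, ∃ B ∈ D, Cond k B A) ∧
  ∀ A B, A ∈ S → B ∈ D → Cond k A B → A ∈ D

/-- `H` is a selective coideal. -/
def Selective (k : ℕ) (H : Coideal k) : Prop :=
  ∀ a A, H.mem A → (Basic k a A).Nonempty →
    ∀ As : ℕ → ℕ → ℕ → ℕ,
      (∀ n, H.mem (As n) ∧ Cond k (As n) A ∧ Cond k (As (n + 1)) (As n) ∧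
        (Basic k a (As n)).Nonempty) →
      ∃ B, H.mem B ∧ B ∈ Basic k a A ∧
        ∀ b, FinCond k b B → Basic k b B ⊆ Basic k b (As (depth k A b))

/-- `H` is a semiselective coideal. -/
def Semiselective (k : ℕ) (H : Coideal k) : Prop :=
  ∀ A, H.mem A →
    ∀ D : List (ℕ → ℕ) → Set (ℕ → ℕ → ℕ),
      (∀ a, FinCond k a A →
        DenseOpenIn k (D a) ({B | H.mem B} ∩ Basic k (rList (depth k A a) A) A)) →
      ∀ C, H.mem C → Cond k C A →
        ∃ B, H.mem B ∧ Cond k B C ∧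
          ∃ As : List (ℕ → ℕ) → ℕ → ℕ → ℕ,
            (∀ a, FinCond k a A → As a ∈ D a) ∧
            ∀ a, FinCond k a B → Basic k a B ⊆ Basic k a (As a)

end FINkSpace

namespace FINkSpace

/-- `D` is `≤*`-dense open in the coideal `H`. -/
def StarDenseOpen (k : ℕ) (H : Coideal k) (D : Set (ℕ → ℕ → ℕ)) : Prop :=
  D ⊆ {A | H.mem A} ∧ (∀ A, H.mem A → ∃ B ∈ D, AlmostCond k B A) ∧
  ∀ A B, H.mem A → B ∈ D → AlmostCond k A B → A ∈ D

end FINkSpace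

namespace FINkSpace

/-! ### Elementary facts on block sequences -/

lemma block_lt {k : ℕ} (hk : 0 < k) {B : ℕ → ℕ → ℕ} (hB : IsBlockSeq k B) {n n' : ℕ}
    (h : n < n') : ∀ {i j : ℕ}, B n i ≠ 0 → B n' j ≠ 0 → i < j := by
  induction n', h using Nat.le_induction with
  | base => intro i j hi hj; exact hB.2 n i j hi hj
  | succ m hm ih =>
    intro i j hi hj
    obtain ⟨z, hz⟩ := (hB.1 m).2.2
    have hz0 : B m z ≠ 0 := by omega
    exact (ih hi hz0).trans (hB.2 m z j hz0 hj)

lemma block_ge {k : ℕ} (hk : 0 < k) {B : ℕ → ℕ → ℕ} (hB : IsBlockSeq k B) (n : ℕ) :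
    ∀ i, B n i ≠ 0 → n ≤ i := by
  induction n with
  | zero => intro i _; exact Nat.zero_le _
  | succ m ih =>
    intro i hi
    obtain ⟨z, hz⟩ := (hB.1 m).2.2
    have hz0 : B m z ≠ 0 := by omega
    have h1 := ih z hz0
    have h2 := hB.2 m z i hz0 hi
    omega

lemma block_eq {k : ℕ} (hk : 0 < k) {B : ℕ → ℕ → ℕ} (hB : IsBlockSeq k B) {n n' m : ℕ}
    (h : B n m ≠ 0) (h' : B n' m ≠ 0) : n = n' := by
  rcases lt_trichotomy n n' with hlt | rfl | hlt
  · exact absurd (block_lt hk hB hlt h h') (lt_irrefl _)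
  · rfl
  · exact absurd (block_lt hk hB hlt h' h) (lt_irrefl _)

lemma block_shift {k : ℕ} {B : ℕ → ℕ → ℕ} (hB : IsBlockSeq k B) (N : ℕ) :
    IsBlockSeq k (fun n => B (n + N)) := by
  refine ⟨fun n => hB.1 _, fun n i j hi hj => ?_⟩
  have : n + 1 + N = n + N + 1 := by omega
  simp only [this] at hj
  exact hB.2 _ i j hi hj

lemma exists_bound {k : ℕ} {p : ℕ → ℕ} (hp : IsFINk k p) : ∃ M, ∀ x, p x ≠ 0 → x ≤ M := by
  obtain ⟨M, hM⟩ := hp.2.1.bddAbove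
  exact ⟨M, fun x hx => hM hx⟩

lemma exists_max {k : ℕ} (hk : 0 < k) {p : ℕ → ℕ} (hp : IsFINk k p) :
    ∃ M, p M ≠ 0 ∧ ∀ x, p x ≠ 0 → x ≤ M := by
  obtain ⟨z, hz⟩ := hp.2.2
  have hne : (supp p).Nonempty := ⟨z, by simp only [supp, Set.mem_ofPred_eq]; omega⟩
  obtain ⟨M, hM, hM'⟩ := Set.exists_max_image (supp p) id hp.2.1 hne
  exact ⟨M, hM, fun x hx => hM' x hx⟩

/-- Pointwise description of the span. -/
def SpW (k : ℕ) (B : ℕ → ℕ → ℕ) (p : ℕ → ℕ) (e : ℕ → ℕ) : Prop :=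
  (∀ n, e n ≤ k) ∧ {n | e n < k}.Finite ∧ (∃ n, e n = 0) ∧
    (∀ n m, B n m ≠ 0 → p m = B n m - e n) ∧ ∀ m, (∀ n, B n m = 0) → p m = 0

lemma inSpan_iff {k : ℕ} (hk : 0 < k) {B : ℕ → ℕ → ℕ} (hB : IsBlockSeq k B) (p : ℕ → ℕ) :
    InSpan k B p ↔ ∃ e, SpW k B p e := by
  classical
  constructor
  · rintro ⟨l, n, i, hn, hik, ⟨j0, hj0⟩, rfl⟩
    have key : ∀ j, (if h : ∃ j', n j' = n j then i h.choose else k) = i j := by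
      intro j
      have h : ∃ j', n j' = n j := ⟨j, rfl⟩
      rw [dif_pos h]
      exact congrArg i (hn.injective h.choose_spec)
    refine ⟨fun m => if h : ∃ j, n j = m then i h.choose else k, ?_, ?_, ⟨n j0, ?_⟩, ?_, ?_⟩
    · intro m
      dsimp only
      split_ifs with h
      · exact hik _
      · exact le_rfl
    · refine (Set.finite_range n).subset ?_
      intro m hm
      by_contra hc
      have : ¬ ∃ j, n j = m := fun ⟨j, hj⟩ => hc ⟨j, hj⟩
      simp [this] at hm
    · dsimp only; rw [key, hj0]
    · intro N m hm
      by_cases h : ∃ j, n j = N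
      · obtain ⟨j, rfl⟩ := h
        dsimp only
        rw [key]
        refine Finset.sum_eq_single (M := ℕ) j ?_ (by simp)
        intro b _ hb
        have : B (n b) m = 0 := by
          by_contra hc
          exact hb (hn.injective (block_eq hk hB hc hm))
        simp [this]
      · dsimp only
        rw [dif_neg h]
        have h1 := (hB.1 N).1 m
        rw [Nat.sub_eq_zero_of_le h1]
        refine Finset.sum_eq_zero ?_
        intro b _
        have : B (n b) m = 0 := by
          by_contra hc
          exact h ⟨b, block_eq hk hB hc hm⟩
        simp [this]
    · intro m hm
      simp [hm]
  · rintro ⟨e, hek, hfin, ⟨n0, hn0⟩, h1, h2⟩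
    set s := hfin.toFinset with hs
    have hn0s : n0 ∈ s := by simp [hs]; omega
    obtain ⟨l, hl⟩ : ∃ l, s.card = l + 1 :=
      Nat.exists_eq_succ_of_ne_zero (Finset.card_ne_zero_of_mem hn0s)
    refine ⟨l, s.orderEmbOfFin hl, fun j => e (s.orderEmbOfFin hl j),
      (s.orderEmbOfFin hl).strictMono, fun j => hek _, ?_, ?_⟩
    · have : n0 ∈ Set.range (s.orderEmbOfFin hl) := by
        rw [Finset.range_orderEmbOfFin]; exact hn0s
      obtain ⟨j, hj⟩ := this
      exact ⟨j, by simp only [hj, hn0]⟩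
    · funext m
      have hsum : ∑ j, (B (s.orderEmbOfFin hl j) m - e (s.orderEmbOfFin hl j))
          = ∑ n ∈ s, (B n m - e n) := by
        conv_rhs => rw [← Finset.map_orderEmbOfFin_univ s hl, Finset.sum_map]
        rfl
      rw [hsum]
      by_cases h : ∃ n, B n m ≠ 0
      · obtain ⟨n, hn⟩ := h
        rw [h1 n m hn]
        symm
        refine Finset.sum_eq_single n ?_ ?_
        · intro b _ hb
          have : B b m = 0 := by
            by_contra hc
            exact hb (block_eq hk hB hc hn)
          simp [this]
        · intro hns
          have h3 : ¬ e n < k := by simpa [hs] using hns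
          have := (hB.1 n).1 m
          omega
      · push Not at h
        rw [h2 m h]
        simp [h]

lemma spW_support {k : ℕ} {B : ℕ → ℕ → ℕ} (hB : IsBlockSeq k B) {p e : ℕ → ℕ}
    (h : SpW k B p e) {m : ℕ} (hm : p m ≠ 0) : ∃ n, e n < k ∧ B n m ≠ 0 := by
  by_cases hx : ∃ n, B n m ≠ 0
  · obtain ⟨n, hn⟩ := hx
    refine ⟨n, ?_, hn⟩
    have h1 := h.2.2.2.1 n m hn
    have h2 := (hB.1 n).1 m
    omega
  · push Not at hx
    exact absurd (h.2.2.2.2 m hx) hm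

lemma spW_peak {k : ℕ} (hk : 0 < k) {B : ℕ → ℕ → ℕ} {p e : ℕ → ℕ}
    (h : SpW k B p e) {n m : ℕ} (hn : e n < k) (hm : B n m = k) : p m ≠ 0 := by
  have := h.2.2.2.1 n m (by omega)
  omega

lemma isFINk_of_spW {k : ℕ} (hk : 0 < k) {B : ℕ → ℕ → ℕ} (hB : IsBlockSeq k B) {p e : ℕ → ℕ}
    (h : SpW k B p e) : IsFINk k p := by
  refine ⟨fun m => ?_, ?_, ?_⟩
  · by_cases hm : p m = 0
    · omega
    · obtain ⟨n, -, hn⟩ := spW_support hB h hm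
      have h1 := h.2.2.2.1 n m hn
      have h2 := (hB.1 n).1 m
      omega
  · refine (h.2.1.biUnion (t := fun n => supp (B n)) (fun n _ => (hB.1 n).2.1)).subset ?_
    intro m hm
    obtain ⟨n, hn, hn'⟩ := spW_support hB h hm
    exact Set.mem_biUnion (show n ∈ {n | e n < k} from hn) hn'
  · obtain ⟨n, hn⟩ := h.2.2.1
    obtain ⟨z, hz⟩ := (hB.1 n).2.2
    refine ⟨z, ?_⟩
    rw [h.2.2.2.1 n z (by omega), hn, hz]
    rfl

lemma spW_trans {k : ℕ} (hk : 0 < k) {A B : ℕ → ℕ → ℕ} (hA : IsBlockSeq k A)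
    (hB : IsBlockSeq k B) {p e : ℕ → ℕ} (h : SpW k A p e)
    (hAB : ∀ n, e n < k → InSpan k B (A n)) : InSpan k B p := by
  classical
  have h' : ∀ n, ∃ eA, e n < k → SpW k B (A n) eA := by
    intro n
    by_cases hn : e n < k
    · obtain ⟨eA, hh⟩ := (inSpan_iff hk hB _).1 (hAB n hn)
      exact ⟨eA, fun _ => hh⟩
    · exact ⟨fun _ => 0, fun hc => absurd hc hn⟩
  choose eA hEA using h'
  have huniq : ∀ l n n', e n < k → eA n l < k → e n' < k → eA n' l < k → n = n' := by
    intro l n n' h1 h2 h3 h4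
    obtain ⟨z, hz⟩ := (hB.1 l).2.2
    exact block_eq hk hA (spW_peak hk (hEA n h1) h2 hz) (spW_peak hk (hEA n' h3) h4 hz)
  -- the composed witness
  have hw : ∀ l, ∃ v, v ≤ k ∧ (∀ n, e n < k → eA n l < k → v = min k (eA n l + e n)) ∧
      ((∀ n, e n < k → ¬ eA n l < k) → v = k) := by
    intro l
    by_cases hx : ∃ n, e n < k ∧ eA n l < k
    · obtain ⟨n, h1, h2⟩ := hx
      refine ⟨min k (eA n l + e n), min_le_left _ _, ?_, fun hc => absurd h2 (hc n h1)⟩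
      intro n' h3 h4
      rw [huniq l n n' h1 h2 h3 h4]
    · push Not at hx
      refine ⟨k, le_rfl, fun n h1 h2 => ?_, fun _ => rfl⟩
      have := hx n h1
      omega
  choose v hvk hv1 hv2 using hw
  -- value of `p` where every active `A n` vanishes
  have hp0 : ∀ m, (∀ n, e n < k → A n m = 0) → p m = 0 := by
    intro m hm
    by_contra hc
    obtain ⟨n, hn, hn'⟩ := spW_support hA h hc
    exact hn' (hm n hn)
  refine (inSpan_iff hk hB p).2 ⟨v, hvk, ?_, ?_, ?_, ?_⟩
  · refine (h.2.1.biUnion' (t := fun n hn => {l | eA n l < k})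
      (fun n hn => (hEA n hn).2.1)).subset ?_
    intro l hl
    by_cases hx : ∃ n, e n < k ∧ eA n l < k
    · obtain ⟨n, h1, h2⟩ := hx
      exact Set.mem_biUnion (t := fun n => {l | eA n l < k}) (show n ∈ {n | e n < k} from h1) h2
    · push Not at hx
      have := hv2 l (fun n hn => by have := hx n hn; omega)
      simp only [Set.mem_ofPred_eq] at hl
      omega
  · obtain ⟨n, hn⟩ := h.2.2.1
    obtain ⟨l, hl⟩ := (hEA n (by omega)).2.2.1
    refine ⟨l, ?_⟩
    rw [hv1 l n (by omega) (by omega)]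
    omega
  · intro l m hlm
    have hle := (hB.1 l).1 m
    by_cases hx : ∃ n, e n < k ∧ eA n l < k
    · obtain ⟨n, h1, h2⟩ := hx
      rw [hv1 l n h1 h2]
      have h3 := (hEA n h1).2.2.2.1 l m hlm
      by_cases h4 : A n m = 0
      · have : p m = 0 := by
          apply hp0
          intro n' hn'
          by_contra hc
          have h5 := (hEA n' hn').2.2.2.1 l m hlm
          have h6 := huniq l n n' h1 h2 hn' (by omega)
          subst h6
          exact hc h4
        omega
      · have h5 := h.2.2.2.1 n m h4
        omega
    · push Not at hx
      rw [hv2 l (fun n hn => by have := hx n hn; omega)]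
      have : p m = 0 := by
        apply hp0
        intro n hn
        have h5 := (hEA n hn).2.2.2.1 l m hlm
        have := hx n hn
        omega
      omega
  · intro m hm
    apply hp0
    intro n hn
    exact (hEA n hn).2.2.2.2 m hm

lemma inSpan_self (k : ℕ) (B : ℕ → ℕ → ℕ) (n : ℕ) : InSpan k B (B n) := by
  refine ⟨0, fun _ => n, fun _ => 0, ?_, by simp, ⟨0, rfl⟩, ?_⟩
  · intro a b hab
    omega
  · funext m; simp

lemma cond_refl (k : ℕ) (B : ℕ → ℕ → ℕ) : Cond k B B := inSpan_self k B

lemma inSpan_trans {k : ℕ} (hk : 0 < k) {A B : ℕ → ℕ → ℕ} (hA : IsBlockSeq k A)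
    (hB : IsBlockSeq k B) {p : ℕ → ℕ} (h : InSpan k A p) (hAB : Cond k A B) : InSpan k B p := by
  obtain ⟨e, he⟩ := (inSpan_iff hk hA p).1 h
  exact spW_trans hk hA hB he (fun n _ => hAB n)

lemma cond_trans {k : ℕ} (hk : 0 < k) {A B C : ℕ → ℕ → ℕ}
    (hB : IsBlockSeq k B) (hC : IsBlockSeq k C) (h : Cond k A B) (h' : Cond k B C) :
    Cond k A C := fun n => inSpan_trans hk hB hC (h n) h'

lemma cond_almost {k : ℕ} {A B : ℕ → ℕ → ℕ} (h : Cond k A B) : AlmostCond k A B :=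
  ⟨0, fun n _ => h n⟩

/-- If `A ≤* B`, elements of `[A]` with large support lie in `[B]`. -/
lemma almost_bound {k : ℕ} (hk : 0 < k) {A B : ℕ → ℕ → ℕ} (hA : IsBlockSeq k A)
    (hB : IsBlockSeq k B) (h : AlmostCond k A B) :
    ∃ M, ∀ q, InSpan k A q → (∀ x, q x ≠ 0 → M < x) → InSpan k B q := by
  obtain ⟨N, hN⟩ := h
  obtain ⟨M, hM⟩ := exists_bound (hA.1 N)
  refine ⟨M, fun q hq hqM => ?_⟩
  obtain ⟨e, he⟩ := (inSpan_iff hk hA q).1 hq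
  refine spW_trans hk hA hB he (fun n hn => hN n ?_)
  by_contra hc
  obtain ⟨z, hz⟩ := (hA.1 n).2.2
  obtain ⟨y, hy⟩ := (hA.1 N).2.2
  have h1 := hqM z (spW_peak hk he hn hz)
  have h2 := block_lt hk hA (show n < N by omega) (i := z) (j := y) (by omega) (by omega)
  have h3 := hM y (by omega)
  omega

lemma almost_trans {k : ℕ} (hk : 0 < k) {A B C : ℕ → ℕ → ℕ} (hA : IsBlockSeq k A)
    (hB : IsBlockSeq k B) (hC : IsBlockSeq k C) (h : AlmostCond k A B) (h' : AlmostCond k B C) :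
    AlmostCond k A C := by
  obtain ⟨M, hM⟩ := almost_bound hk hB hC h'
  obtain ⟨N, hN⟩ := h
  refine ⟨max N (M + 1), fun n hn => hM _ (hN n (le_trans (le_max_left _ _) hn)) ?_⟩
  intro x hx
  have h1 := block_ge hk hA n x hx
  have h2 := le_trans (le_max_right _ _) hn
  omega

lemma rList_eq_iff {d : ℕ} {A B : ℕ → ℕ → ℕ} : rList d A = rList d B ↔ ∀ n < d, A n = B n := by
  simp [rList]

lemma rList_length (d : ℕ) (A : ℕ → ℕ → ℕ) : (rList d A).length = d := by simp [rList]

lemma rList_getD {d : ℕ} {A : ℕ → ℕ → ℕ} {n : ℕ} (h : n < d) (z : ℕ → ℕ) :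
    (rList d A).getD n z = A n := by
  simp [rList, List.getD, h]

lemma mem_shift {k : ℕ} (H : Coideal k) {Y : ℕ → ℕ → ℕ} (hY : H.mem Y) (N : ℕ) :
    H.mem (fun n => Y (n + N)) := by
  refine H.finiteChanges Y _ hY (block_shift (H.blockseq Y hY) N) ?_
  refine ((Set.finite_lt_nat N).image Y).subset ?_
  rintro p (⟨⟨n, rfl⟩, h2⟩ | ⟨⟨n, rfl⟩, h2⟩)
  · refine ⟨n, ?_, rfl⟩
    by_contra hc
    simp only [Set.mem_ofPred_eq, not_lt] at hc
    exact h2 ⟨n - N, by simp [Nat.sub_add_cancel hc]⟩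
  · exact absurd ⟨_, rfl⟩ h2

/-- Replacing an initial segment. -/
lemma splice {k : ℕ} (hk : 0 < k) (H : Coideal k) {B Y : ℕ → ℕ → ℕ} (hB : IsBlockSeq k B)
    (hY : H.mem Y) (h : AlmostCond k Y B) (d : ℕ) :
    ∃ Y', H.mem Y' ∧ Y' ∈ Basic k (rList d B) B ∧ AlmostCond k Y' Y := by
  obtain ⟨N0, hN0⟩ := h
  obtain ⟨M, hM⟩ := exists_bound (hB.1 (d - 1))
  have hYb := H.blockseq Y hY
  set N := max N0 (M + 1) with hN
  set Y' : ℕ → ℕ → ℕ := fun n => if n < d then B n else Y (n - d + N) with hY'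
  have hlo : ∀ n, n < d → Y' n = B n := fun n hn => by simp [hY', hn]
  have hhi : ∀ n, ¬ n < d → Y' n = Y (n - d + N) := fun n hn => by simp [hY', hn]
  have hblock : IsBlockSeq k Y' := by
    refine ⟨fun n => ?_, fun n i j hi hj => ?_⟩
    · by_cases hn : n < d
      · rw [hlo n hn]; exact hB.1 n
      · rw [hhi n hn]; exact hYb.1 _
    · by_cases hn : n + 1 < d
      · rw [hlo n (by omega)] at hi
        rw [hlo _ hn] at hj
        exact hB.2 n i j hi hj
      · rw [hhi _ hn] at hj
        by_cases hn' : n < d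
        · rw [hlo n hn'] at hi
          have hnd : n = d - 1 := by omega
          subst hnd
          have h1 := hM i hi
          have h2 := block_ge hk hYb _ j hj
          have h3 : M + 1 ≤ N := le_max_right _ _
          omega
        · rw [hhi n hn'] at hi
          exact block_lt hk hYb (by omega) hi hj
  refine ⟨Y', ?_, ⟨hblock, ?_, ?_⟩, ⟨d, fun n hn => ?_⟩⟩
  · refine H.finiteChanges Y _ hY hblock ?_
    refine (((Set.finite_lt_nat N).image Y).union ((Set.finite_lt_nat d).image B)).subset ?_
    rintro p (⟨⟨n, rfl⟩, h2⟩ | ⟨⟨n, rfl⟩, h2⟩)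
    · left
      refine ⟨n, ?_, rfl⟩
      by_contra hc
      simp only [Set.mem_ofPred_eq, not_lt] at hc
      refine h2 ⟨n - N + d, ?_⟩
      rw [hhi _ (by omega)]
      congr 1
      omega
    · right
      by_cases hn : n < d
      · exact ⟨n, hn, (hlo n hn).symm⟩
      · exact absurd ⟨_, (hhi n hn).symm⟩ h2
  · rw [rList_length]
    exact rList_eq_iff.2 hlo
  · intro n
    by_cases hn : n < d
    · rw [hlo n hn]; exact inSpan_self k B n
    · rw [hhi n hn]
      refine hN0 _ ?_
      have h3 : N0 ≤ N := le_max_left _ _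
      omega
  · rw [hhi n (by omega)]
    exact inSpan_self k Y _

/-! ### Depth -/

lemma depth_spec {k : ℕ} {A : ℕ → ℕ → ℕ} {a : List (ℕ → ℕ)} (ha : ∀ p ∈ a, InSpan k A p) :
    ∀ p ∈ a, InSpanList k (rList (depth k A a) A) p := by
  have hne : {n | ∀ p ∈ a, InSpanList k (rList n A) p}.Nonempty := by
    have h1 : ∀ p, ∃ d, p ∈ a → ∀ d' ≥ d, InSpanList k (rList d' A) p := by
      intro p
      by_cases hp : p ∈ a
      · obtain ⟨l, n, i, hn, hi, h0, rfl⟩ := ha p hp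
        refine ⟨n (Fin.last l) + 1, fun _ d' hd' => ?_⟩
        have hlt : ∀ j, n j < d' := fun j => by
          have := hn.monotone (Fin.le_last j)
          omega
        refine ⟨l, n, i, hn, fun j => by rw [rList_length]; exact hlt j, hi, h0, ?_⟩
        funext m
        refine Finset.sum_congr rfl fun j _ => ?_
        rw [rList_getD (hlt j)]
      · exact ⟨0, fun hc => absurd hc hp⟩
    choose d hd using h1
    classical
    refine ⟨a.toFinset.sup d, fun p hp => hd p hp _ ?_⟩
    exact Finset.le_sup (f := d) (by simpa using hp)
  exact Nat.sInf_mem hne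

lemma inSpan_of_list {k d : ℕ} {A B : ℕ → ℕ → ℕ} (h : rList d B = rList d A) {p : ℕ → ℕ}
    (hp : InSpanList k (rList d A) p) : InSpan k B p := by
  obtain ⟨l, n, i, hn, hlt, hi, h0, rfl⟩ := hp
  refine ⟨l, n, i, hn, hi, h0, ?_⟩
  funext m
  refine Finset.sum_congr rfl fun j _ => ?_
  have := hlt j
  rw [rList_length] at this
  rw [← h, rList_getD this]

/-! ### Finitely many finite block sequences below a bound -/

lemma finBlock_ge {k : ℕ} (hk : 0 < k) {a : List (ℕ → ℕ)} (ha : IsFinBlockSeq k a) (m : ℕ) :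
    m < a.length → ∀ i, (a.getD m fun _ => 0) i ≠ 0 → m ≤ i := by
  induction m with
  | zero => intro _ i _; exact Nat.zero_le _
  | succ m ih =>
    intro hm i hi
    have hml : m < a.length := by omega
    have hmem : (a.getD m fun _ => 0) ∈ a := by
      rw [List.getD_eq_getElem _ _ hml]; exact List.getElem_mem _
    obtain ⟨z, hz⟩ := (ha.1 _ hmem).2.2
    have h1 := ih hml z (by omega)
    have h2 := ha.2 m hm z i (by omega) hi
    omega

lemma finite_lists {k : ℕ} (hk : 0 < k) (x : ℕ) :
    {a : List (ℕ → ℕ) | IsFinBlockSeq k a ∧ ∀ p ∈ a, ∀ y, p y ≠ 0 → y ≤ x}.Finite := by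
  classical
  have hP : {p : ℕ → ℕ | (∀ n, p n ≤ k) ∧ ∀ y, p y ≠ 0 → y ≤ x}.Finite := by
    refine (Set.finite_range (fun (g : Fin (x + 1) → Fin (k + 1)) (n : ℕ) =>
      if h : n < x + 1 then (g ⟨n, h⟩ : ℕ) else 0)).subset ?_
    rintro p ⟨h1, h2⟩
    refine ⟨fun j => ⟨p j, by have := h1 j; omega⟩, ?_⟩
    funext n
    by_cases h : n < x + 1
    · simp [h]
    · simp only [h, dif_neg, not_false_eq_true]
      by_contra hc
      have := h2 n (fun h0 => hc h0.symm)
      omega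
  have : Finite ↥{p : ℕ → ℕ | (∀ n, p n ≤ k) ∧ ∀ y, p y ≠ 0 → y ≤ x} := hP
  refine ((List.finite_length_le ↥{p : ℕ → ℕ | (∀ n, p n ≤ k) ∧ ∀ y, p y ≠ 0 → y ≤ x}
    (x + 1)).image (List.map Subtype.val)).subset ?_
  rintro a ⟨ha, hax⟩
  have hmem : ∀ p ∈ a, p ∈ {p : ℕ → ℕ | (∀ n, p n ≤ k) ∧ ∀ y, p y ≠ 0 → y ≤ x} :=
    fun p hp => ⟨(ha.1 p hp).1, hax p hp⟩
  refine ⟨a.attach.map (fun q => ⟨q.1, hmem q.1 q.2⟩), ?_, ?_⟩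
  · show (List.map _ a.attach).length ≤ x + 1
    rw [List.length_map, List.length_attach]
    by_contra hc
    have hl : x + 1 < a.length := by omega
    have hm : (a.getD (x + 1) fun _ => 0) ∈ a := by
      rw [List.getD_eq_getElem _ _ hl]; exact List.getElem_mem _
    obtain ⟨z, hz⟩ := (ha.1 _ hm).2.2
    have h1 := finBlock_ge hk ha (x + 1) hl z (by omega)
    have h2 := hax _ hm z (by omega)
    omega
  · simp [List.map_map, Function.comp_def]

lemma countable_lists {k : ℕ} (hk : 0 < k) : {a : List (ℕ → ℕ) | IsFinBlockSeq k a}.Countable := by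
  classical
  refine (Set.countable_iUnion fun x => (finite_lists hk x).countable).mono ?_
  intro a ha
  have h1 : ∀ p, ∃ M, p ∈ a → ∀ y, p y ≠ 0 → y ≤ M := by
    intro p
    by_cases hp : p ∈ a
    · obtain ⟨M, hM⟩ := exists_bound (ha.1 p hp)
      exact ⟨M, fun _ => hM⟩
    · exact ⟨0, fun hc => absurd hc hp⟩
  choose M hM using h1
  refine Set.mem_iUnion.2 ⟨a.toFinset.sup M, ha, fun p hp y hy => (hM p hp y hy).trans ?_⟩
  exact Finset.le_sup (f := M) (by simpa using hp)

/-! ### Sparse condensations, from A4 -/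

/-- The set of left ends of short gaps of `p`. -/
def gapSet (f : ℕ → ℕ) (p : ℕ → ℕ) : Set ℕ := {x | p x ≠ 0 ∧ ∃ y, p y ≠ 0 ∧ x < y ∧ y ≤ f x}

lemma gapSet_fin {k : ℕ} (f : ℕ → ℕ) {p : ℕ → ℕ} (hp : IsFINk k p) : (gapSet f p).Finite :=
  hp.2.1.subset fun _ hx => hx.1

lemma gap_add_long {k : ℕ} (f : ℕ → ℕ) {p q : ℕ → ℕ} (hp : IsFINk k p) (hq : IsFINk k q)
    (hpq : ∀ i j, p i ≠ 0 → q j ≠ 0 → i < j) {x : ℕ} (hx : p x ≠ 0) (hmax : ∀ z, p z ≠ 0 → z ≤ x)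
    (hl : ∀ y, q y ≠ 0 → f x < y) :
    (gapSet f (p + q)).ncard = (gapSet f p).ncard + (gapSet f q).ncard := by
  have hd : Disjoint (gapSet f p) (gapSet f q) := by
    rw [Set.disjoint_left]
    intro z hz hz'
    exact lt_irrefl _ (hpq z z hz.1 hz'.1)
  rw [← Set.ncard_union_eq hd (gapSet_fin f hp) (gapSet_fin f hq)]
  congr 1
  ext z
  simp only [gapSet, Set.mem_ofPred_eq, Set.mem_union, Pi.add_apply]
  constructor
  · rintro ⟨h1, y, h2, h3, h4⟩
    by_cases hz : p z = 0
    · right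
      refine ⟨by omega, y, ?_, h3, h4⟩
      intro hy
      have := hpq y z (by omega) (by omega)
      omega
    · left
      refine ⟨hz, ?_⟩
      by_cases hy : p y = 0
      · have h5 := hpq x y hx (by omega)
        have h6 := hl y (by omega)
        have h7 := hmax z hz
        rcases Nat.lt_or_ge z x with h8 | h8
        · exact ⟨x, hx, h8, by omega⟩
        · have : z = x := by omega
          subst this
          omega
      · exact ⟨y, hy, h3, h4⟩
  · rintro (⟨h1, y, h2, h3, h4⟩ | ⟨h1, y, h2, h3, h4⟩)
    · exact ⟨by omega, y, by omega, h3, h4⟩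
    · exact ⟨by omega, y, by omega, h3, h4⟩

lemma gap_add_short {k : ℕ} (f : ℕ → ℕ) {p q : ℕ → ℕ} (hp : IsFINk k p) (hq : IsFINk k q)
    (hpq : ∀ i j, p i ≠ 0 → q j ≠ 0 → i < j) {x : ℕ} (hx : p x ≠ 0) (hmax : ∀ z, p z ≠ 0 → z ≤ x)
    {w : ℕ} (hw : q w ≠ 0) (hwx : w ≤ f x) :
    (gapSet f (p + q)).ncard = (gapSet f p).ncard + (gapSet f q).ncard + 1 := by
  have hd : Disjoint (gapSet f p) (gapSet f q) := by
    rw [Set.disjoint_left]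
    intro z hz hz'
    exact lt_irrefl _ (hpq z z hz.1 hz'.1)
  have hxn : x ∉ gapSet f p ∪ gapSet f q := by
    rintro (⟨-, y, h2, h3, -⟩ | ⟨h1, -⟩)
    · have := hmax y h2
      omega
    · exact lt_irrefl _ (hpq x x hx h1)
  rw [← Set.ncard_union_eq hd (gapSet_fin f hp) (gapSet_fin f hq),
    ← Set.ncard_insert_of_notMem hxn ((gapSet_fin f hp).union (gapSet_fin f hq))]
  congr 1
  ext z
  simp only [gapSet, Set.mem_ofPred_eq, Set.mem_union, Pi.add_apply, Set.mem_insert_iff]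
  constructor
  · rintro ⟨h1, y, h2, h3, h4⟩
    by_cases hz : p z = 0
    · right; right
      refine ⟨by omega, y, ?_, h3, h4⟩
      intro hy
      have := hpq y z (by omega) (by omega)
      omega
    · have h7 := hmax z hz
      rcases Nat.lt_or_ge z x with h8 | h8
      · right; left
        refine ⟨hz, ?_⟩
        by_cases hy : p y = 0
        · have h5 := hpq x y hx (by omega)
          exact ⟨x, hx, h8, by omega⟩
        · exact ⟨y, hy, h3, h4⟩
      · left; omega
  · rintro (rfl | ⟨h1, y, h2, h3, h4⟩ | ⟨h1, y, h2, h3, h4⟩)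
    · exact ⟨by omega, w, by omega, hpq _ _ hx hw, hwx⟩
    · exact ⟨by omega, y, by omega, h3, h4⟩
    · exact ⟨by omega, y, by omega, h3, h4⟩

lemma inSpan_add {k : ℕ} {B : ℕ → ℕ → ℕ} {n m : ℕ} (h : n < m) : InSpan k B (B n + B m) := by
  refine ⟨1, ![n, m], fun _ => 0, ?_, by simp, ⟨0, rfl⟩, ?_⟩
  · intro a b hab
    fin_cases a <;> fin_cases b <;> simp_all
  · funext z
    simp [Fin.sum_univ_two]

lemma exists_first {k : ℕ} (hk : 0 < k) {B : ℕ → ℕ → ℕ} (hB : IsBlockSeq k B) {p : ℕ → ℕ}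
    (hp : InSpan k B p) : ∃ C ∈ Basic k [] B, [p] = rList (([] : List (ℕ → ℕ)).length + 1) C := by
  obtain ⟨e, he⟩ := (inSpan_iff hk hB p).1 hp
  have hpf := isFINk_of_spW hk hB he
  obtain ⟨M, hM⟩ := exists_bound hpf
  refine ⟨fun n => Nat.casesOn n p (fun j => B (j + (M + 1))), ⟨⟨?_, ?_⟩, ?_, ?_⟩, ?_⟩
  · intro n
    cases n with
    | zero => exact hpf
    | succ n => exact hB.1 _
  · intro n i j hi hj
    cases n with
    | zero =>
      have h1 := hM i hi
      have h2 := block_ge hk hB _ j hj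
      omega
    | succ n => exact (block_shift hB (M + 1)).2 n i j hi hj
  · rfl
  · intro n
    cases n with
    | zero => exact hp
    | succ n => exact inSpan_self k B _
  · rfl

lemma finCond_nil (k : ℕ) (A : ℕ → ℕ → ℕ) : FinCond k [] A := by
  refine ⟨⟨by simp, by simp⟩, by simp⟩

lemma sparse {k : ℕ} (hk : 0 < k) (H : Coideal k) {A : ℕ → ℕ → ℕ} (hA : H.mem A) (f : ℕ → ℕ) :
    ∃ B, H.mem B ∧ Cond k B A ∧ ∀ n x y, B n x ≠ 0 → (∀ z, B n z ≠ 0 → z ≤ x) →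
      B (n + 1) y ≠ 0 → f x < y := by
  obtain ⟨B, hB, hBA, hO⟩ := H.a4 A hA [] (finCond_nil k A)
    {b | ∃ p, b = [p] ∧ Even (gapSet f p).ncard}
  have hBb := H.blockseq B hB
  refine ⟨B, hB, hBA.2.2, ?_⟩
  have hhom : (∀ p, InSpan k B p → Even (gapSet f p).ncard) ∨
      (∀ p, InSpan k B p → ¬ Even (gapSet f p).ncard) := by
    rcases hO with h | h
    · left
      intro p hp
      obtain ⟨q, hq, hq'⟩ := h (exists_first hk hBb hp)
      have : p = q := by simpa using hq
      rw [this]; exact hq'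
    · right
      intro p hp hc
      have : [p] ∈ (∅ : Set (List (ℕ → ℕ))) := by
        rw [← h]
        exact ⟨exists_first hk hBb hp, p, rfl, hc⟩
      exact this
  have heven : ∀ p, InSpan k B p → Even (gapSet f p).ncard := by
    rcases hhom with h | h
    · exact h
    · exfalso
      obtain ⟨x, hx, hmax⟩ := exists_max hk (hBb.1 0)
      have h1 := gap_add_long f (hBb.1 0) (hBb.1 (f x + 1))
        (fun i j hi hj => block_lt hk hBb (Nat.succ_pos _) hi hj) hx hmax
        (fun y hy => block_ge hk hBb _ y hy)
      have h2 := h _ (inSpan_add (k := k) (B := B) (n := 0) (m := f x + 1) (Nat.succ_pos _))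
      have h3 := h _ (inSpan_self k B 0)
      have h4 := h _ (inSpan_self k B (f x + 1))
      rw [h1] at h2
      exact h2 (by rw [Nat.even_add]; tauto)
  intro n x y hx hmax hy
  by_contra hc
  have h1 := gap_add_short f (hBb.1 n) (hBb.1 (n + 1)) (hBb.2 n) hx hmax hy (by omega)
  have h2 := heven _ (inSpan_add (k := k) (B := B) (n := n) (m := n + 1) (Nat.lt_succ_self _))
  have h3 := heven _ (inSpan_self k B n)
  have h4 := heven _ (inSpan_self k B (n + 1))
  rw [h1, Nat.even_add_one] at h2
  exact h2 (h3.add h4)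

/-! ### The two directions -/

lemma basic_self {k : ℕ} {A : ℕ → ℕ → ℕ} (hA : IsBlockSeq k A) (d : ℕ) :
    A ∈ Basic k (rList d A) A := ⟨hA, by rw [rList_length], cond_refl k A⟩

lemma finCond_rList {k : ℕ} {B : ℕ → ℕ → ℕ} (hB : IsBlockSeq k B) (n : ℕ) :
    FinCond k (rList n B) B := by
  refine ⟨⟨?_, ?_⟩, ?_⟩
  · intro p hp
    simp only [rList, List.mem_map] at hp
    obtain ⟨m, -, rfl⟩ := hp
    exact hB.1 m
  · intro m hm i j hi hj
    rw [rList_length] at hm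
    rw [rList_getD (by omega)] at hi
    rw [rList_getD hm] at hj
    exact hB.2 m i j hi hj
  · intro p hp
    simp only [rList, List.mem_map] at hp
    obtain ⟨m, -, rfl⟩ := hp
    exact inSpan_self k B m

lemma forward {k : ℕ} (hk : 0 < k) (H : Coideal k) (hS : Semiselective k H)
    (D : ℕ → Set (ℕ → ℕ → ℕ)) (hD : ∀ n, StarDenseOpen k H (D n)) (A : ℕ → ℕ → ℕ)
    (hA : H.mem A) : ∃ B, H.mem B ∧ (∀ n, B ∈ D n) ∧ AlmostCond k B A := by
  have hAb := H.blockseq A hA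
  have hdense : ∀ a, FinCond k a A → DenseOpenIn k
      ({B | H.mem B} ∩ Basic k (rList (depth k A a) A) A ∩ D a.length)
      ({B | H.mem B} ∩ Basic k (rList (depth k A a) A) A) := by
    intro a ha
    refine ⟨Set.inter_subset_left, ?_, ?_⟩
    · rintro B ⟨hB, hBA⟩
      have hBb := H.blockseq B hB
      obtain ⟨Y, hY, hYB⟩ := (hD a.length).2.1 B hB
      obtain ⟨Y', h1, h2, h3⟩ := splice hk H hBb ((hD a.length).1 hY) hYB (depth k A a)
      refine ⟨Y', ⟨⟨h1, ⟨h2.1, ?_, cond_trans hk hBb hAb h2.2.2 hBA.2.2⟩⟩,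
        (hD a.length).2.2 _ _ h1 hY h3⟩, h2.2.2⟩
      have h4 := h2.2.1
      have h5 := hBA.2.1
      rw [rList_length] at h4 h5 ⊢
      rw [h4, h5]
    · rintro X Y hX ⟨hY, hYD⟩ hXY
      exact ⟨hX, (hD a.length).2.2 _ _ hX.1 hYD (cond_almost hXY)⟩
  obtain ⟨B, hB, hBA, As, hAs, hAs'⟩ := hS A hA
    (fun a => {B | H.mem B} ∩ Basic k (rList (depth k A a) A) A ∩ D a.length) hdense A hA
    (cond_refl k A)
  · have hBb := H.blockseq B hB
    refine ⟨B, hB, fun n => ?_, cond_almost hBA⟩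
    have h1 := finCond_rList hBb n
    have h2 : FinCond k (rList n B) A :=
      ⟨h1.1, fun p hp => inSpan_trans hk hBb hAb (h1.2 p hp) hBA⟩
    have h3 := hAs' _ h1 (basic_self hBb n)
    have h4 := (hAs _ h2).2
    rw [rList_length] at h4
    exact (hD n).2.2 B _ hB h4 (cond_almost h3.2.2)

lemma backward {k : ℕ} (hk : 0 < k) (H : Coideal k)
    (hS : ∀ D : ℕ → Set (ℕ → ℕ → ℕ), (∀ n, StarDenseOpen k H (D n)) →
      ∀ A, H.mem A → ∃ B, H.mem B ∧ (∀ n, B ∈ D n) ∧ AlmostCond k B A) :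
    Semiselective k H := by
  classical
  intro A hA D hD C hC hCA
  have hAb := H.blockseq A hA
  have hCb := H.blockseq C hC
  -- step 1: one `B` almost below members of all the `D a`
  let E : List (ℕ → ℕ) → Set (ℕ → ℕ → ℕ) := fun a =>
    {B | H.mem B ∧ ((∃ B' ∈ D a, AlmostCond k B B') ∨
      ∀ X, H.mem X → AlmostCond k X B → ¬ AlmostCond k X A)}
  have hE : ∀ a, FinCond k a A → StarDenseOpen k H (E a) := by
    intro a ha
    obtain ⟨hD1, hD2, hD3⟩ := hD a ha
    refine ⟨fun B hB => hB.1, ?_, ?_⟩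
    · intro B hB
      have hBb := H.blockseq B hB
      by_cases hx : ∃ X, H.mem X ∧ AlmostCond k X B ∧ AlmostCond k X A
      · obtain ⟨X, hX, hXB, hXA⟩ := hx
        have hXb := H.blockseq X hX
        obtain ⟨Y, h1, h2, h3⟩ := splice hk H hAb hX hXA (depth k A a)
        obtain ⟨Z, hZ, hZY⟩ := hD2 Y ⟨h1, h2⟩
        have hZH : H.mem Z := (hD1 hZ).1
        have hZb := H.blockseq Z hZH
        refine ⟨Z, ⟨hZH, Or.inl ⟨Z, hZ, cond_almost (cond_refl k Z)⟩⟩, ?_⟩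
        exact almost_trans hk hZb hXb hBb
          (almost_trans hk hZb (H.blockseq Y h1) hXb (cond_almost hZY) h3) hXB
      · push Not at hx
        exact ⟨B, ⟨hB, Or.inr hx⟩, cond_almost (cond_refl k B)⟩
    · rintro X Y hX ⟨hY, hYE⟩ hXY
      have hXb := H.blockseq X hX
      have hYb := H.blockseq Y hY
      refine ⟨hX, ?_⟩
      rcases hYE with ⟨Z, hZ, hYZ⟩ | h
      · exact Or.inl ⟨Z, hZ, almost_trans hk hXb hYb (H.blockseq Z (hD1 hZ).1) hXY hYZ⟩
      · exact Or.inr fun W hW hWX =>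
          h W hW (almost_trans hk (H.blockseq W hW) hXb hYb hWX hXY)
  have hcount : {a | FinCond k a A}.Countable := (countable_lists hk).mono fun a ha => ha.1
  obtain ⟨en, hen⟩ := hcount.exists_eq_range ⟨[], finCond_nil k A⟩
  have henF : ∀ n, FinCond k (en n) A := fun n => by
    have : en n ∈ {a | FinCond k a A} := by rw [hen]; exact ⟨n, rfl⟩
    exact this
  obtain ⟨B0, hB0, hB0E, hB0C⟩ := hS (fun n => E (en n)) (fun n => hE _ (henF n)) C hC
  have hB0b := H.blockseq B0 hB0
  have hB0A : AlmostCond k B0 A := almost_trans hk hB0b hCb hAb hB0C (cond_almost hCA)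
  have hex : ∀ a, ∃ B', FinCond k a A → B' ∈ D a ∧ AlmostCond k B0 B' := by
    intro a
    by_cases ha : FinCond k a A
    · have : a ∈ Set.range en := by rw [← hen]; exact ha
      obtain ⟨n, rfl⟩ := this
      rcases (hB0E n).2 with ⟨B', h1, h2⟩ | h
      · exact ⟨B', fun _ => ⟨h1, h2⟩⟩
      · exact absurd hB0A (h B0 hB0 (cond_almost (cond_refl k B0)))
    · exact ⟨A, fun hc => absurd hc ha⟩
  choose As hAs using hex
  have hAsb : ∀ a, FinCond k a A → IsBlockSeq k (As a) := fun a ha =>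
    H.blockseq _ ((hD a ha).1 (hAs a ha).1).1
  -- step 2: pass to a tail
  obtain ⟨N1, hN1⟩ := hB0C
  obtain ⟨N2, hN2⟩ := (hAs [] (finCond_nil k A)).2
  set B1 : ℕ → ℕ → ℕ := fun n => B0 (n + max N1 N2) with hB1def
  have hB1 : H.mem B1 := mem_shift H hB0 _
  have hB1b := H.blockseq B1 hB1
  have hB1C : Cond k B1 C := fun n => hN1 _ (by have := le_max_left N1 N2; omega)
  have hB1nil : Cond k B1 (As []) := fun n => hN2 _ (by have := le_max_right N1 N2; omega)
  have hB10 : Cond k B1 B0 := fun n => inSpan_self k B0 _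
  -- step 3: the gap function
  have hbd : ∀ a, ∃ M, FinCond k a A → ∀ q, InSpan k B1 q → (∀ x, q x ≠ 0 → M < x) →
      InSpan k (As a) q := by
    intro a
    by_cases ha : FinCond k a A
    · obtain ⟨M, hM⟩ := almost_bound hk hB0b (hAsb a ha) (hAs a ha).2
      exact ⟨M, fun _ q hq => hM q (inSpan_trans hk hB1b hB0b hq hB10)⟩
    · exact ⟨0, fun hc => absurd hc ha⟩
  choose M hM using hbd
  let f : ℕ → ℕ := fun x => (finite_lists hk x).toFinset.sup M
  obtain ⟨B, hB, hBB1, hgap⟩ := sparse hk H hB1 f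
  have hBb := H.blockseq B hB
  have hBC := cond_trans hk hB1b hCb hBB1 hB1C
  have hBA := cond_trans hk hCb hAb hBC hCA
  refine ⟨B, hB, hBC, As, fun a ha => (hAs a ha).1, ?_⟩
  intro a haB X hX
  have ha : FinCond k a A := ⟨haB.1, fun p hp => inSpan_trans hk hBb hAb (haB.2 p hp) hBA⟩
  obtain ⟨hXb, hXa, hXB⟩ := hX
  refine ⟨hXb, hXa, fun j => ?_⟩
  by_cases hj : j < a.length
  · have hmem : X j ∈ a := by
      rw [← hXa]
      simp only [rList, List.mem_map, List.mem_range]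
      exact ⟨j, hj, rfl⟩
    have h1 := ((hD a ha).1 (hAs a ha).1).2.2.1
    rw [rList_length] at h1
    exact inSpan_of_list h1 (depth_spec ha.2 _ hmem)
  · rcases Nat.eq_zero_or_pos a.length with h0 | hpos
    · have : a = [] := List.length_eq_zero_iff.1 h0
      subst this
      exact inSpan_trans hk hB1b (hAsb _ ha) (inSpan_trans hk hBb hB1b (hXB j) hBB1) hB1nil
    · set t := a.length - 1 with ht
      have htj : t < j := by omega
      obtain ⟨e, he⟩ := (inSpan_iff hk hBb _).1 (hXB t)
      obtain ⟨e', he'⟩ := (inSpan_iff hk hBb _).1 (hXB j)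
      have hne : {n | e n < k}.Nonempty := by
        obtain ⟨n, hn⟩ := he.2.2.1
        exact ⟨n, by simp only [Set.mem_ofPred_eq]; omega⟩
      obtain ⟨ns, hns, hnsmax⟩ := Set.exists_max_image _ id he.2.1 hne
      obtain ⟨mx, hmx, hmxmax⟩ := exists_max hk (hBb.1 ns)
      -- the support of `X t` is bounded by `mx`
      have hXt : ∀ y, X t y ≠ 0 → y ≤ mx := by
        intro y hy
        obtain ⟨n, hn, hn'⟩ := spW_support hBb he hy
        have hle : n ≤ ns := hnsmax n hn
        rcases Nat.lt_or_ge n ns with hlt | hge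
        · exact (block_lt hk hBb hlt hn' hmx).le
        · have : n = ns := le_antisymm hle hge
          subst this
          exact hmxmax y hn'
      have hasup : a ∈ (finite_lists hk mx).toFinset := by
        simp only [Set.Finite.mem_toFinset, Set.mem_ofPred_eq]
        refine ⟨ha.1, ?_⟩
        intro p hp y hy
        rw [← hXa] at hp
        simp only [rList, List.mem_map, List.mem_range] at hp
        obtain ⟨i, hi, rfl⟩ := hp
        rcases Nat.lt_or_ge i t with hlt | hge
        · obtain ⟨z, hz⟩ := (hXb.1 t).2.2
          have hz0 : X t z ≠ 0 := by omega
          exact (block_lt hk hXb hlt hy hz0).le.trans (hXt z hz0)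
        · have : i = t := by omega
          subst this
          exact hXt y hy
      have hMf : M a ≤ f mx := Finset.le_sup (f := M) hasup
      refine hM a ha _ (inSpan_trans hk hBb hB1b (hXB j) hBB1) ?_
      intro x hx
      obtain ⟨n, hn, hnx⟩ := spW_support hBb he' hx
      have hnlt : ns < n := by
        by_contra hc
        obtain ⟨z, hz⟩ := (hBb.1 ns).2.2
        obtain ⟨y, hy⟩ := (hBb.1 n).2.2
        have h1 := block_lt hk hXb htj (spW_peak hk he hns hz) (spW_peak hk he' hn hy)
        rcases Nat.lt_or_ge n ns with hlt | hge
        · have h2 := block_lt hk hBb hlt (i := y) (j := z) (by omega) (by omega)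
          omega
        · have : n = ns := by omega
          subst this
          exact lt_irrefl _
            (block_lt hk hXb htj (spW_peak hk he hns hz) (spW_peak hk he' hn hz))
      refine lt_of_le_of_lt hMf ?_
      rcases Nat.lt_or_ge (ns + 1) n with hlt | hge
      · obtain ⟨z, hz⟩ := (hBb.1 (ns + 1)).2.2
        have hz0 : B (ns + 1) z ≠ 0 := by omega
        exact (hgap ns mx z hmx hmxmax hz0).trans (block_lt hk hBb hlt hz0 hnx)
      · have : n = ns + 1 := by omega
        subst this
        exact hgap ns mx x hmx hmxmax hnx

/-! ### The degenerate case `k = 0` -/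

lemma block_zero {A B : ℕ → ℕ → ℕ} (hA : IsBlockSeq 0 A) (hB : IsBlockSeq 0 B) : A = B := by
  funext n m
  have h1 := (hA.1 n).1 m
  have h2 := (hB.1 n).1 m
  omega

/-- A coideal is semiselective iff `(H, ≤*)` is σ-distributive. -/
theorem semiselective_iff_sigma_distributive (k : ℕ) (H : Coideal k) :
    Semiselective k H ↔
    ∀ D : ℕ → Set (ℕ → ℕ → ℕ), (∀ n, StarDenseOpen k H (D n)) →
      ∀ A, H.mem A → ∃ B, H.mem B ∧ (∀ n, B ∈ D n) ∧ AlmostCond k B A := by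
  rcases Nat.eq_zero_or_pos k with rfl | hk
  · constructor
    · intro _ D hD A hA
      refine ⟨A, hA, fun n => ?_, cond_almost (cond_refl 0 A)⟩
      obtain ⟨B, hB, -⟩ := (hD n).2.1 A hA
      rw [block_zero (H.blockseq A hA) (H.blockseq B ((hD n).1 hB))]
      exact hB
    · intro _ A hA D hD C hC _
      have hCA := block_zero (H.blockseq C hC) (H.blockseq A hA)
      subst hCA
      refine ⟨C, hC, cond_refl 0 C, fun _ => C, fun a ha => ?_, fun a _ => subset_rfl⟩
      obtain ⟨B, hB, -⟩ := (hD a ha).2.1 C ⟨hC, basic_self (H.blockseq C hC) _⟩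
      have := block_zero (H.blockseq C hC) (H.blockseq B ((hD a ha).1 hB).1)
      rw [← this] at hB
      exact hB
  · exact ⟨fun h D hD A hA => forward hk H h D hD A hA, backward hk H⟩

end FINkSpace
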